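/- For each t = 0,…,T−1 there exists a function φ_t such that along every realization of positive probability of the closed-loop system, the next new-state realization of agent 2 satisfies s_{t+1}^2 = φ_t(s_t^2, π_t^2, γ_t^{[2,1]}, u_t^2, w_t, v_{t+1}^1, v_{t+1}^2), where s_t^2 = (x_t, l_t^{[1,2]}) and l_{t+1}^{[1,2]} = l_t^{[1,2]} ∪ {y_{t+1}^1, u_t^1} with u_t^1 = γ_t^{[2,1]}(e_t(π_t^2, l_t^{[1,2]})), x_{t+1} = f_t(x_t, u_t^1, u_t^2, w_t), and y_{t+1}^1 = h_{t+1}^1(x_{t+1}, v_{t+1}^1). Similarly, there exists a function φ̂_t such that the new information of agent 2 satisfies z_{t+1}^2 = φ̂_t(s_t^2, π_t^2, γ_t^{[2,1]}, u_t^2, w_t, v_{t+1}^1, v_{t+1}^2). -/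

import Mathlib

/-!
Common framework: a two-agent sequential dynamic team with nested information
structure (Dave & Malikopoulos, "Structural results for decentralized
stochastic control with a nested information structure").

* `X t` : state space at time `t`; `U1 t`, `U2 t` : action spaces of agents 1 and 2;
* `W t` : disturbance; `V1 t`, `V2 t` : measurement noises; `Y1 t`, `Y2 t` : observations.
* Dynamics `X_{t+1} = f t X_t U¹_t U²_t W_t`, observations `Y^k_t = h^k t X_t V^k_t`.
* Memories `M²_t = (Y²_{0:t}, U²_{0:t-1})`, `L_t^{[1,2]} = (Y¹_{0:t}, U¹_{0:t-1})`,
  `M¹_t = (L_t^{[1,2]}, M²_t)` (nested information).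
* The primitive random variables are independent with given PMFs; the sample
  space for horizon `T` is `ΩT`, with the product mass function `mass`.
-/

open scoped Classical
open Finset

namespace NestedTeam

noncomputable section

/-- Memory of agent 2 at time `t`: observations `Y²₀,…,Y²ₜ` and actions `U²₀,…,U²ₜ₋₁`. -/
abbrev M2 (Y2 U2 : ℕ → Type) (t : ℕ) : Type :=
  ((s : Fin (t + 1)) → Y2 s) × ((s : Fin t) → U2 s)

/-- The private information `L_t^{[1,2]} = M¹_t \ M²_t` of agent 1. -/
abbrev Lp (Y1 U1 : ℕ → Type) (t : ℕ) : Type :=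
  ((s : Fin (t + 1)) → Y1 s) × ((s : Fin t) → U1 s)

/-- Memory of agent 1 at time `t` (nested information: it contains `M²_t`). -/
abbrev M1 (Y1 Y2 U1 U2 : ℕ → Type) (t : ℕ) : Type :=
  Lp Y1 U1 t × M2 Y2 U2 t

/-- The system: dynamics, observation maps and per-stage cost. -/
structure Sys (X U1 U2 W V1 V2 Y1 Y2 : ℕ → Type) where
  f : ∀ t, X t → U1 t → U2 t → W t → X (t + 1)
  h1 : ∀ t, X t → V1 t → Y1 t
  h2 : ∀ t, X t → V2 t → Y2 t
  c : ∀ t, X t → U1 t → U2 t → ℝ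

/-- A control strategy profile: `U¹_t = g1 t M¹_t`, `U²_t = g2 t M²_t`. -/
structure Strat (U1 U2 Y1 Y2 : ℕ → Type) where
  g1 : ∀ t, M1 Y1 Y2 U1 U2 t → U1 t
  g2 : ∀ t, M2 Y2 U2 t → U2 t

/-- A realization of the primitive random variables. -/
structure Prim (X W V1 V2 : ℕ → Type) where
  x0 : X 0
  w : ∀ t, W t
  v1 : ∀ t, V1 t
  v2 : ∀ t, V2 t

variable {X U1 U2 W V1 V2 Y1 Y2 : ℕ → Type}

/-- The closed-loop trajectory: states `X_{0:t}` and actions `U^{1:2}_{0:t-1}`. -/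
def hist (S : Sys X U1 U2 W V1 V2 Y1 Y2) (g : Strat U1 U2 Y1 Y2) (ρ : Prim X W V1 V2) :
    (t : ℕ) → ((s : Fin (t + 1)) → X s) × ((s : Fin t) → U1 s × U2 s)
  | 0 => (Fin.cons (α := fun s : Fin 1 => X s) ρ.x0 (fun i => i.elim0), fun i => i.elim0)
  | t + 1 =>
    let p := hist S g ρ t
    let y1 : (s : Fin (t + 1)) → Y1 s := fun s => S.h1 s (p.1 s) (ρ.v1 s)
    let y2 : (s : Fin (t + 1)) → Y2 s := fun s => S.h2 s (p.1 s) (ρ.v2 s)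
    let m1 : M1 Y1 Y2 U1 U2 t := ((y1, fun s => (p.2 s).1), (y2, fun s => (p.2 s).2))
    let a1 := g.g1 t m1
    let a2 := g.g2 t m1.2
    (Fin.snoc (α := fun s : Fin (t + 2) => X s) p.1 (S.f t (p.1 (Fin.last t)) a1 a2 (ρ.w t)),
     Fin.snoc (α := fun s : Fin (t + 1) => U1 s × U2 s) p.2 (a1, a2))

/-- State `X_t` along the closed loop. -/
def xTraj (S : Sys X U1 U2 W V1 V2 Y1 Y2) (g : Strat U1 U2 Y1 Y2) (ρ : Prim X W V1 V2)
    (t : ℕ) : X t := (hist S g ρ t).1 (Fin.last t)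

/-- `L_t^{[1,2]} = (Y¹_{0:t}, U¹_{0:t-1})` along the closed loop. -/
def lpTraj (S : Sys X U1 U2 W V1 V2 Y1 Y2) (g : Strat U1 U2 Y1 Y2) (ρ : Prim X W V1 V2)
    (t : ℕ) : Lp Y1 U1 t :=
  (fun s => S.h1 s ((hist S g ρ t).1 s) (ρ.v1 s), fun s => ((hist S g ρ t).2 s).1)

/-- `M²_t = (Y²_{0:t}, U²_{0:t-1})` along the closed loop. -/
def m2Traj (S : Sys X U1 U2 W V1 V2 Y1 Y2) (g : Strat U1 U2 Y1 Y2) (ρ : Prim X W V1 V2)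
    (t : ℕ) : M2 Y2 U2 t :=
  (fun s => S.h2 s ((hist S g ρ t).1 s) (ρ.v2 s), fun s => ((hist S g ρ t).2 s).2)

/-- `M¹_t` along the closed loop. -/
def m1Traj (S : Sys X U1 U2 W V1 V2 Y1 Y2) (g : Strat U1 U2 Y1 Y2) (ρ : Prim X W V1 V2)
    (t : ℕ) : M1 Y1 Y2 U1 U2 t := (lpTraj S g ρ t, m2Traj S g ρ t)

/-- Action `U¹_t` along the closed loop. -/
def u1Traj (S : Sys X U1 U2 W V1 V2 Y1 Y2) (g : Strat U1 U2 Y1 Y2) (ρ : Prim X W V1 V2)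
    (t : ℕ) : U1 t := g.g1 t (m1Traj S g ρ t)

/-- Action `U²_t` along the closed loop. -/
def u2Traj (S : Sys X U1 U2 W V1 V2 Y1 Y2) (g : Strat U1 U2 Y1 Y2) (ρ : Prim X W V1 V2)
    (t : ℕ) : U2 t := g.g2 t (m2Traj S g ρ t)

/-- Observation `Y¹_t` along the closed loop. -/
def y1Traj (S : Sys X U1 U2 W V1 V2 Y1 Y2) (g : Strat U1 U2 Y1 Y2) (ρ : Prim X W V1 V2)
    (t : ℕ) : Y1 t := S.h1 t (xTraj S g ρ t) (ρ.v1 t)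

/-- Observation `Y²_t` along the closed loop. -/
def y2Traj (S : Sys X U1 U2 W V1 V2 Y1 Y2) (g : Strat U1 U2 Y1 Y2) (ρ : Prim X W V1 V2)
    (t : ℕ) : Y2 t := S.h2 t (xTraj S g ρ t) (ρ.v2 t)

/-- New information `Z¹_{t+1} = (Y¹_{t+1}, U¹_t, Y²_{t+1}, U²_t)` of agent 1. -/
def z1Traj (S : Sys X U1 U2 W V1 V2 Y1 Y2) (g : Strat U1 U2 Y1 Y2) (ρ : Prim X W V1 V2)
    (t : ℕ) : Y1 (t + 1) × U1 t × Y2 (t + 1) × U2 t :=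
  (y1Traj S g ρ (t + 1), u1Traj S g ρ t, y2Traj S g ρ (t + 1), u2Traj S g ρ t)

/-- New information `Z²_{t+1} = (Y²_{t+1}, U²_t)` of agent 2. -/
def z2Traj (S : Sys X U1 U2 W V1 V2 Y1 Y2) (g : Strat U1 U2 Y1 Y2) (ρ : Prim X W V1 V2)
    (t : ℕ) : Y2 (t + 1) × U2 t := (y2Traj S g ρ (t + 1), u2Traj S g ρ t)

/-- Sample space of primitive random variables for horizon `T`. -/
abbrev ΩT (X W V1 V2 : ℕ → Type) (T : ℕ) : Type :=
  X 0 × ((t : Fin (T + 1)) → W t) × ((t : Fin (T + 1)) → V1 t) × ((t : Fin (T + 1)) → V2 t)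

/-- Extend a finite-horizon family to all times (by junk beyond the horizon). -/
def ext {α : ℕ → Type} [∀ t, Inhabited (α t)] (T : ℕ) (a : (t : Fin (T + 1)) → α t)
    (t : ℕ) : α t := if h : t < T + 1 then a ⟨t, h⟩ else default

/-- The primitive realization corresponding to a sample point. -/
def toPrim [∀ t, Inhabited (W t)] [∀ t, Inhabited (V1 t)] [∀ t, Inhabited (V2 t)]
    (T : ℕ) (ω : ΩT X W V1 V2 T) : Prim X W V1 V2 :=
  ⟨ω.1, ext T ω.2.1, ext T ω.2.2.1, ext T ω.2.2.2⟩

/-- The (known) probability mass functions of the mutually independent primitive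
random variables. -/
structure PrimPMF (X W V1 V2 : ℕ → Type) [Fintype (X 0)] [∀ t, Fintype (W t)]
    [∀ t, Fintype (V1 t)] [∀ t, Fintype (V2 t)] where
  pX0 : X 0 → ℝ
  pW : ∀ t, W t → ℝ
  pV1 : ∀ t, V1 t → ℝ
  pV2 : ∀ t, V2 t → ℝ
  pX0_nonneg : ∀ x, 0 ≤ pX0 x
  pX0_sum : ∑ x, pX0 x = 1
  pW_nonneg : ∀ t w, 0 ≤ pW t w
  pW_sum : ∀ t, ∑ w, pW t w = 1
  pV1_nonneg : ∀ t v, 0 ≤ pV1 t v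
  pV1_sum : ∀ t, ∑ v, pV1 t v = 1
  pV2_nonneg : ∀ t v, 0 ≤ pV2 t v
  pV2_sum : ∀ t, ∑ v, pV2 t v = 1

variable [Fintype (X 0)] [∀ t, Fintype (W t)] [∀ t, Fintype (V1 t)] [∀ t, Fintype (V2 t)]
variable [∀ t, Inhabited (W t)] [∀ t, Inhabited (V1 t)] [∀ t, Inhabited (V2 t)]

/-- Product mass of a sample point (independent primitives). -/
def mass (P : PrimPMF X W V1 V2) (T : ℕ) (ω : ΩT X W V1 V2 T) : ℝ :=
  P.pX0 ω.1 * (∏ t : Fin (T + 1), P.pW t (ω.2.1 t)) *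
    (∏ t : Fin (T + 1), P.pV1 t (ω.2.2.1 t)) * (∏ t : Fin (T + 1), P.pV2 t (ω.2.2.2 t))

/-- Elementary conditional probability `P(A | B)` on a finite sample space. -/
def condProb {Ω : Type*} [Fintype Ω] (P : Ω → ℝ) (A B : Ω → Prop) : ℝ :=
  (∑ ω, if A ω ∧ B ω then P ω else 0) / (∑ ω, if B ω then P ω else 0)

/-- Elementary conditional expectation `E[F | B]` on a finite sample space. -/
def condExp {Ω : Type*} [Fintype Ω] (P : Ω → ℝ) (F : Ω → ℝ) (B : Ω → Prop) : ℝ :=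
  (∑ ω, if B ω then P ω * F ω else 0) / (∑ ω, if B ω then P ω else 0)

/-- Agent 1's information state `Π¹_t = P(X_t = · | M¹_t)` at the realization `ω`. -/
def infoState1 (S : Sys X U1 U2 W V1 V2 Y1 Y2) (g : Strat U1 U2 Y1 Y2)
    (P : PrimPMF X W V1 V2) (T : ℕ) (ω : ΩT X W V1 V2 T) (t : ℕ) : X t → ℝ :=
  fun x => condProb (mass P T)
    (fun ω' => xTraj S g (toPrim T ω') t = x)
    (fun ω' => m1Traj S g (toPrim T ω') t = m1Traj S g (toPrim T ω) t)

/-- Agent 2's information state `Π²_t = P((X_t, L_t^{[1,2]}) = · | M²_t)` at `ω`. -/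
def infoState2 (S : Sys X U1 U2 W V1 V2 Y1 Y2) (g : Strat U1 U2 Y1 Y2)
    (P : PrimPMF X W V1 V2) (T : ℕ) (ω : ΩT X W V1 V2 T) (t : ℕ) :
    X t × Lp Y1 U1 t → ℝ :=
  fun sl => condProb (mass P T)
    (fun ω' => (xTraj S g (toPrim T ω') t, lpTraj S g (toPrim T ω') t) = sl)
    (fun ω' => m2Traj S g (toPrim T ω') t = m2Traj S g (toPrim T ω) t)

/-- Per-stage cost along the closed loop. -/
def stageCost (S : Sys X U1 U2 W V1 V2 Y1 Y2) (g : Strat U1 U2 Y1 Y2) (ρ : Prim X W V1 V2)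
    (t : ℕ) : ℝ := S.c t (xTraj S g ρ t) (u1Traj S g ρ t) (u2Traj S g ρ t)

/-- Expected cost-to-go `𝒥_{t₀}(g) = E[Σ_{t=t₀}^T c_t(X_t,U¹_t,U²_t)]`. -/
def costToGo (S : Sys X U1 U2 W V1 V2 Y1 Y2) (g : Strat U1 U2 Y1 Y2)
    (P : PrimPMF X W V1 V2) (T t0 : ℕ) : ℝ :=
  ∑ ω : ΩT X W V1 V2 T, mass P T ω * ∑ t ∈ Finset.Icc t0 T, stageCost S g (toPrim T ω) t

/-- Expected total cost `𝒥(g) = E[Σ_{t=0}^T c_t(X_t,U¹_t,U²_t)]`. -/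
def totalCost (S : Sys X U1 U2 W V1 V2 Y1 Y2) (g : Strat U1 U2 Y1 Y2)
    (P : PrimPMF X W V1 V2) (T : ℕ) : ℝ := costToGo S g P T 0

/-- `(g, ψ²)` is a compatible control/prescription pair: agent 1's action is
generated by the prescription `Γ_t^{[2,1]} = ψ_t(M²_t)` applied to `Π¹_t`. -/
def Compat (S : Sys X U1 U2 W V1 V2 Y1 Y2) (g : Strat U1 U2 Y1 Y2)
    (ψ : ∀ t, M2 Y2 U2 t → (X t → ℝ) → U1 t) (P : PrimPMF X W V1 V2) (T : ℕ) : Prop :=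
  ∀ t, t ≤ T → ∀ ω : ΩT X W V1 V2 T, 0 < mass P T ω →
    u1Traj S g (toPrim T ω) t =
      ψ t (m2Traj S g (toPrim T ω) t) (infoState1 S g P T ω t)

/-- The map `e_t` of Lemma 4: conditioning a joint distribution on
`𝒳_t × 𝓛_t^{[1,2]}` on its second component. -/
def eMap [∀ t, Fintype (X t)] (t : ℕ) (π2 : X t × Lp Y1 U1 t → ℝ) (l : Lp Y1 U1 t) :
    X t → ℝ := fun x => π2 (x, l) / ∑ x', π2 (x', l)

theorem xTraj_succ' (S : Sys X U1 U2 W V1 V2 Y1 Y2) (g : Strat U1 U2 Y1 Y2)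
    (ρ : Prim X W V1 V2) (t : ℕ) :
    xTraj S g ρ (t + 1) =
      S.f t (xTraj S g ρ t) (u1Traj S g ρ t) (u2Traj S g ρ t) (ρ.w t) := by
  show (hist S g ρ (t + 1)).1 (Fin.last (t + 1)) = _
  rw [hist]
  exact Fin.snoc_last (α := fun s : Fin (t + 2) => X s) _ _

theorem lpTraj_succ' (S : Sys X U1 U2 W V1 V2 Y1 Y2) (g : Strat U1 U2 Y1 Y2)
    (ρ : Prim X W V1 V2) (t : ℕ) :
    lpTraj S g ρ (t + 1) =
      (Fin.snoc (α := fun s : Fin (t + 2) => Y1 s) (lpTraj S g ρ t).1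
        (S.h1 (t + 1) (xTraj S g ρ (t + 1)) (ρ.v1 (t + 1))),
       Fin.snoc (α := fun s : Fin (t + 1) => U1 s) (lpTraj S g ρ t).2 (u1Traj S g ρ t)) := by
  refine Prod.ext ?_ ?_
  · funext s
    refine Fin.lastCases ?_ (fun i => ?_) s
    · refine Eq.trans ?_ (Fin.snoc_last (α := fun s : Fin (t + 2) => Y1 s) _ _).symm
      rfl
    · refine Eq.trans ?_ (Fin.snoc_castSucc (α := fun s : Fin (t + 2) => Y1 s) _ _ i).symm
      have h : (hist S g ρ (t + 1)).1 i.castSucc = (hist S g ρ t).1 i := by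
        rw [hist]
        exact Fin.snoc_castSucc (α := fun s : Fin (t + 2) => X s) _ _ i
      show S.h1 _ ((hist S g ρ (t + 1)).1 i.castSucc) _ = _
      rw [h]
      rfl
  · funext s
    refine Fin.lastCases ?_ (fun i => ?_) s
    · refine Eq.trans ?_ (Fin.snoc_last (α := fun s : Fin (t + 1) => U1 s) _ _).symm
      show ((hist S g ρ (t + 1)).2 (Fin.last t)).1 = _
      rw [hist]
      exact congrArg Prod.fst (Fin.snoc_last (α := fun s : Fin (t + 1) => U1 s × U2 s) _ _)
    · refine Eq.trans ?_ (Fin.snoc_castSucc (α := fun s : Fin (t + 1) => U1 s) _ _ i).symm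
      show ((hist S g ρ (t + 1)).2 i.castSucc).1 = _
      rw [hist]
      exact congrArg Prod.fst
        (Fin.snoc_castSucc (α := fun s : Fin (t + 1) => U1 s × U2 s) _ _ i)

theorem mass_nonneg' (P : PrimPMF X W V1 V2) (T : ℕ) (ω : ΩT X W V1 V2 T) :
    0 ≤ mass P T ω := by
  unfold mass
  have h1 := P.pX0_nonneg ω.1
  have h2 := Finset.prod_nonneg (s := Finset.univ)
    (fun (t : Fin (T + 1)) _ => P.pW_nonneg t (ω.2.1 t))
  have h3 := Finset.prod_nonneg (s := Finset.univ)
    (fun (t : Fin (T + 1)) _ => P.pV1_nonneg t (ω.2.2.1 t))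
  have h4 := Finset.prod_nonneg (s := Finset.univ)
    (fun (t : Fin (T + 1)) _ => P.pV2_nonneg t (ω.2.2.2 t))
  exact mul_nonneg (mul_nonneg (mul_nonneg h1 h2) h3) h4

/-- Abstract Bayes step. -/
theorem condProb_bayes {Ω A B C : Type*} [Fintype Ω] [Fintype A] (p : Ω → ℝ)
    (hp : ∀ ω, 0 ≤ p ω) (a : Ω → A) (b : Ω → B) (c : Ω → C) (ω : Ω) (hω : 0 < p ω) (x : A) :
    condProb p (fun ω' => (a ω', b ω') = (x, b ω)) (fun ω' => c ω' = c ω) /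
      ∑ x', condProb p (fun ω' => (a ω', b ω') = (x', b ω)) (fun ω' => c ω' = c ω) =
    condProb p (fun ω' => a ω' = x) (fun ω' => (b ω', c ω') = (b ω, c ω)) := by
  unfold condProb
  have hpos : (0 : ℝ) < ∑ ω', if c ω' = c ω then p ω' else 0 := by
    refine Finset.sum_pos' (fun i _ => ?_) ⟨ω, Finset.mem_univ _, by simpa using hω⟩
    split_ifs
    · exact hp i
    · exact le_rfl
  rw [← Finset.sum_div, div_div_div_cancel_right₀ hpos.ne', Finset.sum_comm]
  congr 1
  · refine Finset.sum_congr rfl fun i _ => ?_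
    simp only [Prod.mk.injEq, and_assoc]
  · refine Finset.sum_congr rfl fun i _ => ?_
    by_cases h : b i = b ω ∧ c i = c ω
    · simp [h.1, h.2]
    · rw [if_neg (by simpa using h)]
      refine Finset.sum_eq_zero fun x' _ => if_neg ?_
      rintro ⟨h1, h2⟩
      exact h ⟨(Prod.mk.inj h1).2, h2⟩

theorem eMap_infoState2 [∀ t, Fintype (X t)]
    (S : Sys X U1 U2 W V1 V2 Y1 Y2) (g : Strat U1 U2 Y1 Y2)
    (P : PrimPMF X W V1 V2) (T : ℕ) (ω : ΩT X W V1 V2 T) (hω : 0 < mass P T ω) (t : ℕ) :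
    eMap t (infoState2 S g P T ω t) (lpTraj S g (toPrim T ω) t) = infoState1 S g P T ω t := by
  funext x
  exact condProb_bayes (mass P T) (mass_nonneg' P T)
    (fun ω' => xTraj S g (toPrim T ω') t) (fun ω' => lpTraj S g (toPrim T ω') t)
    (fun ω' => m2Traj S g (toPrim T ω') t) ω hω x

/-- Appendix B, equations (29) and (36) of the paper. There are
functions `φ_t` and `φ̂_t` such that, along every realization of positive
probability of the closed loop, the next new state of agent 2 satisfies
`S²_{t+1} = (X_{t+1}, L_{t+1}^{[1,2]}) = φ_t (S²_t, Π²_t, Γ_t^{[2,1]}, U²_t, W_t,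
V¹_{t+1}, V²_{t+1})` and the new information of agent 2 satisfies
`Z²_{t+1} = φ̂_t (S²_t, Π²_t, Γ_t^{[2,1]}, U²_t, W_t, V¹_{t+1}, V²_{t+1})`
(here `U¹_t = Γ_t^{[2,1]}(e_t(Π²_t, L_t^{[1,2]}))`, `X_{t+1} = f_t(X_t,U¹_t,U²_t,W_t)`,
`L_{t+1}^{[1,2]} = L_t^{[1,2]} ∪ {Y¹_{t+1}, U¹_t}`, `Y¹_{t+1} = h¹_{t+1}(X_{t+1},V¹_{t+1})`). -/
theorem newstate_update_functions
    [∀ t, Fintype (X t)] [∀ t, Fintype (U1 t)] [∀ t, Fintype (U2 t)]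
    [∀ t, Fintype (Y1 t)] [∀ t, Fintype (Y2 t)]
    (T : ℕ) (S : Sys X U1 U2 W V1 V2 Y1 Y2) (P : PrimPMF X W V1 V2) :
    ∃ (φ : ∀ t, (X t × Lp Y1 U1 t) → (X t × Lp Y1 U1 t → ℝ) → ((X t → ℝ) → U1 t) →
        U2 t → W t → V1 (t + 1) → V2 (t + 1) → X (t + 1) × Lp Y1 U1 (t + 1))
      (φhat : ∀ t, (X t × Lp Y1 U1 t) → (X t × Lp Y1 U1 t → ℝ) → ((X t → ℝ) → U1 t) →
        U2 t → W t → V1 (t + 1) → V2 (t + 1) → Y2 (t + 1) × U2 t),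
      ∀ (g : Strat U1 U2 Y1 Y2) (ψ : ∀ t, M2 Y2 U2 t → (X t → ℝ) → U1 t),
        Compat S g ψ P T →
        ∀ t, t < T → ∀ ω : ΩT X W V1 V2 T, 0 < mass P T ω →
          (xTraj S g (toPrim T ω) (t + 1), lpTraj S g (toPrim T ω) (t + 1)) =
            φ t (xTraj S g (toPrim T ω) t, lpTraj S g (toPrim T ω) t)
              (infoState2 S g P T ω t) (ψ t (m2Traj S g (toPrim T ω) t))
              (u2Traj S g (toPrim T ω) t) ((toPrim T ω).w t)
              ((toPrim T ω).v1 (t + 1)) ((toPrim T ω).v2 (t + 1)) ∧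
          z2Traj S g (toPrim T ω) t =
            φhat t (xTraj S g (toPrim T ω) t, lpTraj S g (toPrim T ω) t)
              (infoState2 S g P T ω t) (ψ t (m2Traj S g (toPrim T ω) t))
              (u2Traj S g (toPrim T ω) t) ((toPrim T ω).w t)
              ((toPrim T ω).v1 (t + 1)) ((toPrim T ω).v2 (t + 1)) := by
  refine ⟨fun t s π γ u2 w v1 _ =>
      (S.f t s.1 (γ (eMap t π s.2)) u2 w,
        (Fin.snoc (α := fun s : Fin (t + 2) => Y1 s) s.2.1
          (S.h1 (t + 1) (S.f t s.1 (γ (eMap t π s.2)) u2 w) v1),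
         Fin.snoc (α := fun s : Fin (t + 1) => U1 s) s.2.2 (γ (eMap t π s.2)))),
    fun t s π γ u2 w _ v2 =>
      (S.h2 (t + 1) (S.f t s.1 (γ (eMap t π s.2)) u2 w) v2, u2), ?_⟩
  intro g ψ hc t ht ω hω
  have hu := hc t ht.le ω hω
  dsimp only
  rw [eMap_infoState2 S g P T ω hω t, ← hu]
  refine ⟨?_, ?_⟩
  · rw [lpTraj_succ', xTraj_succ']
  · rw [z2Traj, y2Traj, xTraj_succ']


end

end NestedTeam
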